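/- arXiv:1608.07317 — 2 statements merged into one kernel-verified Lean document; each statement's English description precedes it below -/
import Mathlib

section
/- Let n > 1, let χ be any Dirichlet character modulo n, and let k be a nonzero integer. Then |Σ_{w mod n} χ(w)·e(kw/n)| ≤ |k| · √n + σ(gcd(n,|k|)), where σ is the sum-of-divisors function. In particular the Gauss-type sum is O_k(√n). -/
open Finset ArithmeticFunction

noncomputable def e (x : ℝ) : ℂ := Complex.exp (2 * Real.pi * Complex.I * x)

/-!
Let `ψ` be a primitive additive character of a finite commutative ring `R` and put
`G(b) = ∑ x, χ x * ψ (b * x)`. Since `|G(b * u)| = |G(b)|` for every unit `u`, the `|Rˣ|` equal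
terms `|G(b * u)|²` are part of `∑ a, |G(b * a)|²`. Parseval's identity, followed by the
Cauchy-Schwarz inequality on the fibres of `x ↦ b * x`, bounds that sum by
`|R| * |Ann b| * ∑ x, |χ x|² = |R| * |Ann b| * |Rˣ|`, so `|G(b)|² ≤ |Ann b| * |R|`. In `ZMod n`
the annihilator of `k` has `gcd (n, |k|)` elements.
-/

section Fibers

variable {G H E : Type*} [AddGroup G] [Fintype G] [AddMonoid H] [DecidableEq H]

lemma card_fiber_le_card_fiber_zero (φ : G →+ H) (y : H) : #{x | φ x = y} ≤ #{x | φ x = 0} := by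
  by_cases hy : y ∈ Set.range φ
  · exact (AddMonoidHom.card_fiber_eq_of_mem_range φ hy ⟨0, map_zero φ⟩).le
  · have hempty : ({x | φ x = y} : Finset G) = ∅ :=
      filter_eq_empty_iff.mpr fun x _ hx ↦ hy ⟨x, hx⟩
    simp [hempty]

lemma sum_sq_norm_sum_fiber_le [Fintype H] [SeminormedAddCommGroup E] (φ : G →+ H) (f : G → E) :
    ∑ y, ‖∑ x with φ x = y, f x‖ ^ 2 ≤ #{x | φ x = 0} * ∑ x, ‖f x‖ ^ 2 := by
  calc ∑ y, ‖∑ x with φ x = y, f x‖ ^ 2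
      ≤ ∑ y, #{x | φ x = 0} * ∑ x with φ x = y, ‖f x‖ ^ 2 := by
        refine sum_le_sum fun y _ ↦ ?_
        calc ‖∑ x with φ x = y, f x‖ ^ 2
            ≤ (∑ x with φ x = y, ‖f x‖) ^ 2 := by gcongr; exact norm_sum_le _ _
          _ ≤ #{x | φ x = y} * ∑ x with φ x = y, ‖f x‖ ^ 2 := sq_sum_le_card_mul_sum_sq
          _ ≤ #{x | φ x = 0} * ∑ x with φ x = y, ‖f x‖ ^ 2 := by
            gcongr ?_ * _
            exact mod_cast card_fiber_le_card_fiber_zero φ y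
    _ = #{x | φ x = 0} * ∑ x, ‖f x‖ ^ 2 := by rw [← mul_sum, sum_fiberwise]

end Fibers

lemma norm_mulChar_unit {R : Type*} [CommMonoid R] [Finite Rˣ] (χ : MulChar R ℂ) (u : Rˣ) :
    ‖χ u‖ = 1 := by
  refine Complex.norm_eq_one_of_pow_eq_one (n := Nat.card Rˣ) ?_ Nat.card_pos.ne'
  rw [← map_pow, ← Units.val_pow_eq_pow_val, pow_card_eq_one', Units.val_one, map_one]

section FiniteRing

variable {R : Type*} [CommRing R] [Fintype R]

lemma sum_sq_norm_sum_mul_addChar {ψ : AddChar R ℂ} (hψ : ψ.IsPrimitive) (f : R → ℂ) :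
    ∑ a, ‖∑ x, f x * ψ (a * x)‖ ^ 2 = Fintype.card R * ∑ x, ‖f x‖ ^ 2 := by
  classical
  have hexpand (a : R) : ((‖∑ x, f x * ψ (a * x)‖ ^ 2 : ℝ) : ℂ) =
      ∑ x, ∑ y, f x * star (f y) * ψ (a * (x - y)) := by
    rw [Complex.ofReal_pow, ← Complex.mul_conj', map_sum, sum_mul_sum]
    refine sum_congr rfl fun x _ ↦ sum_congr rfl fun y _ ↦ ?_
    rw [map_mul (starRingEnd ℂ), ← AddChar.map_neg_eq_conj, starRingEnd_apply, mul_mul_mul_comm,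
      ← AddChar.map_add_eq_mul, mul_sub, sub_eq_add_neg]
  refine Complex.ofReal_injective ?_
  calc ((∑ a, ‖∑ x, f x * ψ (a * x)‖ ^ 2 : ℝ) : ℂ)
      = ∑ x, ∑ y, f x * star (f y) * ∑ a, ψ (a * (x - y)) := by
        simp_rw [Complex.ofReal_sum, hexpand, mul_sum]
        rw [sum_comm]
        exact sum_congr rfl fun x _ ↦ sum_comm
    _ = ∑ x, f x * star (f x) * Fintype.card R := by
        simp [AddChar.sum_mulShift _ hψ, sub_eq_zero]
    _ = ((Fintype.card R * ∑ x, ‖f x‖ ^ 2 : ℝ) : ℂ) := by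
        push_cast
        simp_rw [mul_sum, ← Complex.mul_conj', starRingEnd_apply, mul_comm]

lemma norm_gaussSum_mulShift_unit (χ : MulChar R ℂ) (ψ : AddChar R ℂ) (u : Rˣ) :
    ‖gaussSum χ (ψ.mulShift u)‖ = ‖gaussSum χ ψ‖ := by
  rw [← gaussSum_mulShift χ ψ u, norm_mul, norm_mulChar_unit, one_mul]

variable [DecidableEq R]

lemma sum_sq_norm_sum_mul_addChar_mul_le {ψ : AddChar R ℂ} (hψ : ψ.IsPrimitive)
    (f : R → ℂ) (b : R) :
    ∑ a, ‖∑ x, f x * ψ (a * (b * x))‖ ^ 2 ≤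
      Fintype.card R * (#{x | b * x = 0} * ∑ x, ‖f x‖ ^ 2) := by
  have hfiber (a : R) : ∑ x, f x * ψ (a * (b * x)) =
      ∑ y, (∑ x with b * x = y, f x) * ψ (a * y) := by
    rw [← sum_fiberwise univ (b * ·)]
    refine sum_congr rfl fun y _ ↦ ?_
    rw [sum_mul]
    refine sum_congr rfl fun x hx ↦ ?_
    rw [(mem_filter.mp hx).2]
  simp_rw [hfiber, sum_sq_norm_sum_mul_addChar hψ]
  gcongr
  exact sum_sq_norm_sum_fiber_le (AddMonoidHom.mulLeft b) f

lemma sum_sq_norm_mulChar (χ : MulChar R ℂ) : ∑ x, ‖χ x‖ ^ 2 = Fintype.card Rˣ := by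
  have hsq (x : R) : ((‖χ x‖ ^ 2 : ℝ) : ℂ) = (1 : MulChar R ℂ) x := by
    rw [← mul_inv_cancel χ, MulChar.mul_apply, ← MulChar.star_apply', Complex.ofReal_pow,
      ← Complex.mul_conj', starRingEnd_apply]
  refine Complex.ofReal_injective ?_
  simp_rw [Complex.ofReal_sum, hsq, MulChar.sum_one_eq_card_units, Complex.ofReal_natCast]

lemma card_units_mul_sq_norm_gaussSum_le (χ : MulChar R ℂ) (ψ : AddChar R ℂ) :
    Fintype.card Rˣ * ‖gaussSum χ ψ‖ ^ 2 ≤ ∑ a, ‖gaussSum χ (ψ.mulShift a)‖ ^ 2 := by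
  calc Fintype.card Rˣ * ‖gaussSum χ ψ‖ ^ 2
      = ∑ u : Rˣ, ‖gaussSum χ (ψ.mulShift u)‖ ^ 2 := by
        simp_rw [norm_gaussSum_mulShift_unit, sum_const, card_univ, nsmul_eq_mul]
    _ = ∑ a ∈ univ.map ⟨Units.val, Units.val_injective⟩, ‖gaussSum χ (ψ.mulShift a)‖ ^ 2 := by
        rw [sum_map]; rfl
    _ ≤ ∑ a, ‖gaussSum χ (ψ.mulShift a)‖ ^ 2 :=
        sum_le_univ_sum_of_nonneg fun _ ↦ by positivity

lemma sq_norm_gaussSum_mulShift_le (χ : MulChar R ℂ) {ψ : AddChar R ℂ}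
    (hψ : ψ.IsPrimitive) (b : R) :
    ‖gaussSum χ (ψ.mulShift b)‖ ^ 2 ≤ #{x | b * x = 0} * Fintype.card R := by
  have hunits : (0 : ℝ) < Fintype.card Rˣ := mod_cast Fintype.card_pos
  refine le_of_mul_le_mul_left ?_ hunits
  calc Fintype.card Rˣ * ‖gaussSum χ (ψ.mulShift b)‖ ^ 2
      ≤ ∑ a, ‖gaussSum χ ((ψ.mulShift b).mulShift a)‖ ^ 2 :=
        card_units_mul_sq_norm_gaussSum_le χ _
    _ = ∑ a, ‖∑ x, χ x * ψ (a * (b * x))‖ ^ 2 := by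
        simp_rw [gaussSum, AddChar.mulShift_apply, mul_left_comm b]
    _ ≤ Fintype.card R * (#{x | b * x = 0} * ∑ x, ‖χ x‖ ^ 2) :=
        sum_sq_norm_sum_mul_addChar_mul_le hψ χ b
    _ = Fintype.card Rˣ * (#{x | b * x = 0} * Fintype.card R) := by
        rw [sum_sq_norm_mulChar]; ring

end FiniteRing

section ZMod

variable (n : ℕ) [NeZero n]

lemma card_zmod_filter_intCast_mul_eq_zero (k : ℤ) :
    #{x : ZMod n | (k : ZMod n) * x = 0} = n.gcd k.natAbs := by
  have hker : Nat.card (nsmulAddMonoidHom k.natAbs : ZMod n →+ ZMod n).ker = n.gcd k.natAbs := by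
    rw [IsAddCyclic.card_nsmulAddMonoidHom_ker, Nat.card_zmod]
  rw [← hker, ← Fintype.card_subtype, ← Nat.card_eq_fintype_card]
  refine Nat.card_congr (Equiv.subtypeEquivRight fun x ↦ ?_)
  rw [AddMonoidHom.mem_ker, nsmulAddMonoidHom_apply, ← zsmul_eq_mul, natAbs_nsmul_eq_zero]

variable {n}

lemma e_intCast_mul_natCast_div (k : ℤ) (w : ℕ) :
    e ((k : ℝ) * w / n) = ZMod.stdAddChar ((k : ZMod n) * (w : ZMod n)) := by
  have hcast : (k : ZMod n) * w = ((k * w : ℤ) : ZMod n) := by push_cast; rfl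
  rw [hcast, ZMod.stdAddChar_coe, e]
  push_cast
  ring_nf

lemma sum_range_dirichletCharacter_mul_e (χ : DirichletCharacter ℂ n) (k : ℤ) :
    ∑ w ∈ range n, χ (w : ZMod n) * e ((k : ℝ) * w / n) =
      gaussSum χ (ZMod.stdAddChar.mulShift (k : ZMod n)) := by
  simp_rw [e_intCast_mul_natCast_div]
  exact sum_bij' (fun w _ ↦ (w : ZMod n)) (fun a _ ↦ a.val) (fun _ _ ↦ mem_univ _)
    (fun a _ ↦ mem_range.mpr a.val_lt) (fun w hw ↦ ZMod.val_cast_of_lt (mem_range.mp hw))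
    (fun a _ ↦ ZMod.natCast_zmod_val a) fun _ _ ↦ rfl

end ZMod

lemma sqrt_gcd_mul_le (n : ℕ) {m : ℕ} (hm : m ≠ 0) : √(n.gcd m * n) ≤ m * √n := by
  have hone : (1 : ℝ) ≤ m := mod_cast Nat.one_le_iff_ne_zero.mpr hm
  have hgcd : (n.gcd m : ℝ) ≤ m := mod_cast Nat.gcd_le_right n (Nat.pos_of_ne_zero hm)
  rw [Real.sqrt_mul (Nat.cast_nonneg _)]
  gcongr
  exact Real.sqrt_le_iff.mpr ⟨by positivity, hgcd.trans (le_self_pow₀ hone two_ne_zero)⟩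

theorem gauss_sum_general_bound_general (n : ℕ) [NeZero n] (χ : DirichletCharacter ℂ n) (k : ℤ) :
    ‖∑ w ∈ range n, χ (w : ZMod n) * e ((k : ℝ) * w / n)‖ ≤ √(n.gcd k.natAbs * n) := by
  refine Real.le_sqrt_of_sq_le ?_
  rw [sum_range_dirichletCharacter_mul_e]
  simpa only [card_zmod_filter_intCast_mul_eq_zero, ZMod.card] using
    sq_norm_gaussSum_mulShift_le χ (ZMod.isPrimitive_stdAddChar n) (k : ZMod n)

/-- Gauss-type sums of arbitrary Dirichlet characters are O_k(√n). -/
theorem gauss_sum_general_bound (n : ℕ) (hn : 1 < n) (χ : DirichletCharacter ℂ n)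
    (k : ℤ) (hk : k ≠ 0) :
    ‖∑ w ∈ Finset.range n, χ (w : ZMod n) * e ((k : ℝ) * w / n)‖ ≤
      (k.natAbs : ℝ) * Real.sqrt n + (sigma 1 (Nat.gcd n k.natAbs) : ℝ) := by
  have : NeZero n := ⟨by lia⟩
  exact le_add_of_le_of_nonneg ((gauss_sum_general_bound_general n χ k).trans
    (sqrt_gcd_mul_le n (Int.natAbs_ne_zero.mpr hk))) (Nat.cast_nonneg _)
end

section
/- Fix a nonzero integer k. As n → ∞ through odd composite integers, (1/#W(n))·Σ_{w ∈ W(n)} e(kw/n) → 0, where W(n) is the set of Miller-Rabin witnesses of n. -/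
/-!
Let `S(a) = ∑_{h ∈ H} ψ(a h)`, with `ψ` the standard additive character and `H` a subgroup of
`(ℤ/n)ˣ`. Since `S` is constant on `H`-orbits and `k h` takes each value at most `|k|` times,
Parseval gives `|H| |S(k)|² ≤ |k| ∑_a |S(a)|² = |k| n |H|`, so `|S(k)| ≤ √(|k| n)` however small `H`
is. The same bound holds on cosets, hence on every solution set of `u ^ m = t`. The units of `ℤ/n`
that are not witnesses form a union of `O(log n)` such sets, and the full unit group is one more, so
the witness sum is `O_k(√n log n)`.

It remains to see that witnesses are numerous. In place of Rabin's `3 / 4` bound it is enough that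
the nonwitnesses lie in a proper subgroup of `(ℤ/n)ˣ`, whence `φ(n) ≤ 2 #W(n)`, together with
`n ^ (3 / 5) ≤ φ(n)` for odd `n`.
-/

open Finset Filter

/-- The 2-adic valuation of n - 1. -/
def s2 (n : ℕ) : ℕ := (n - 1).factorization 2

/-- The odd part of n - 1. -/
def oddPart (n : ℕ) : ℕ := (n - 1) / 2 ^ s2 n

/-- The Miller-Rabin witness set of n. -/
def witnessSet (n : ℕ) : Finset ℕ :=
  (Finset.range n).filter (fun a => 1 < a ∧ Nat.gcd a n = 1 ∧
    (a : ZMod n) ^ oddPart n ≠ 1 ∧ ∀ j < s2 n, (a : ZMod n) ^ (2 ^ j * oddPart n) ≠ -1)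

lemma sum_comp_addMonoidHom_le {A B : Type*} [AddGroup A] [AddMonoid B] [Fintype A]
    [Fintype B] [DecidableEq B] (f : A →+ B) {F : B → ℝ} (hF : 0 ≤ F) :
    ∑ x, F (f x) ≤ #{x | f x = 0} * ∑ y, F y := by
  have card_fiber_eq (y : B) (hy : y ∈ univ.image f) : #{x | f x = y} = #{x | f x = 0} := by
    refine AddMonoidHom.card_fiber_eq_of_mem_range f ?_ ⟨0, map_zero f⟩
    simpa using hy
  calc ∑ x, F (f x) = ∑ y ∈ univ.image f, #{x | f x = y} • F y := sum_comp F f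
    _ = ∑ y ∈ univ.image f, #{x | f x = 0} * F y := sum_congr rfl fun y hy => by
        rw [card_fiber_eq y hy, nsmul_eq_mul]
    _ ≤ ∑ y, #{x | f x = 0} * F y :=
        sum_le_univ_sum_of_nonneg fun y => mul_nonneg (Nat.cast_nonneg _) (hF y)
    _ = #{x | f x = 0} * ∑ y, F y := (mul_sum ..).symm

section PrimitiveAddChar

variable {R : Type*} [CommRing R] [Fintype R] {ψ : AddChar R ℂ}

lemma sum_norm_sq_sum_addChar_mul (hψ : ψ.IsPrimitive) (A : Finset R) :
    ∑ a, ‖∑ x ∈ A, ψ (a * x)‖ ^ 2 = Fintype.card R * (#A : ℝ) := by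
  classical
  have norm_sq_eq (a : R) : ((‖∑ x ∈ A, ψ (a * x)‖ ^ 2 : ℝ) : ℂ) =
      ∑ x ∈ A, ∑ y ∈ A, ψ (a * (x - y)) := by
    rw [Complex.ofReal_pow, ← Complex.mul_conj', map_sum, sum_mul_sum]
    simp only [← AddChar.map_neg_eq_conj, ← AddChar.map_add_eq_mul, mul_neg, mul_add,
      sub_eq_add_neg]
  have orthogonality (x y : R) :
      ∑ a, ψ (a * (x - y)) = if x = y then (Fintype.card R : ℂ) else 0 := by
    simp [AddChar.sum_mulShift _ hψ, sub_eq_zero]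
  have key : ((∑ a, ‖∑ x ∈ A, ψ (a * x)‖ ^ 2 : ℝ) : ℂ) = Fintype.card R * #A := by
    calc ((∑ a, ‖∑ x ∈ A, ψ (a * x)‖ ^ 2 : ℝ) : ℂ)
        = ∑ a, ∑ x ∈ A, ∑ y ∈ A, ψ (a * (x - y)) := by
          rw [Complex.ofReal_sum, sum_congr rfl fun a _ => norm_sq_eq a]
      _ = ∑ x ∈ A, ∑ y ∈ A, ∑ a, ψ (a * (x - y)) := by
          rw [sum_comm]
          exact sum_congr rfl fun x _ => sum_comm
      _ = Fintype.card R * #A := by simp [orthogonality, mul_comm]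
  exact_mod_cast key

variable [DecidableEq R]

lemma norm_sq_sum_subgroup_addChar_mul_le (hψ : ψ.IsPrimitive) (H : Subgroup Rˣ) [Fintype H]
    (c : R) :
    ‖∑ h : H, ψ (c * (h : Rˣ))‖ ^ 2 ≤ #{x | c * x = 0} * (Fintype.card R : ℝ) := by
  set S : R → ℝ := fun a => ‖∑ h : H, ψ (a * (h : Rˣ))‖ ^ 2
  let ι : H ↪ R := ⟨fun h => ((h : Rˣ) : R), Units.val_injective.comp Subtype.val_injective⟩
  have S_nonneg : 0 ≤ S := fun a => sq_nonneg _
  have S_mul (g : H) : S (c * (g : Rˣ)) = S c := by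
    have := Fintype.sum_equiv (Equiv.mulLeft g) (fun h : H => ψ (c * (g : Rˣ) * (h : Rˣ)))
      (fun h : H => ψ (c * (h : Rˣ))) fun h => by simp [mul_assoc]
    simp only [S, this]
  have parseval : ∑ a, S a = Fintype.card R * (Fintype.card H : ℝ) := by
    simpa [S, ι] using sum_norm_sq_sum_addChar_mul hψ (univ.map ι)
  have key : (Fintype.card H : ℝ) * S c ≤
      Fintype.card H * (#{x | c * x = 0} * (Fintype.card R : ℝ)) := by
    calc (Fintype.card H : ℝ) * S c = ∑ g : H, S (c * (g : Rˣ)) := by simp [S_mul]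
      _ = ∑ x ∈ univ.map ι, S (c * x) := by simp [ι]
      _ ≤ ∑ x, S (c * x) := sum_le_univ_sum_of_nonneg fun x => S_nonneg _
      _ ≤ #{x | c * x = 0} * ∑ a, S a := sum_comp_addMonoidHom_le (AddMonoidHom.mulLeft c) S_nonneg
      _ = Fintype.card H * (#{x | c * x = 0} * (Fintype.card R : ℝ)) := by rw [parseval]; ring
  exact le_of_mul_le_mul_left key (Nat.cast_pos.mpr Fintype.card_pos)

lemma norm_sq_sum_fiber_addChar_mul_le {G : Type*} [Group G] [DecidableEq G]
    (hψ : ψ.IsPrimitive) (f : Rˣ →* G) (t : G) (c : R) :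
    ‖∑ u with f u = t, ψ (c * u)‖ ^ 2 ≤ #{x | c * x = 0} * (Fintype.card R : ℝ) := by
  by_cases ht : ∃ v, f v = t
  · obtain ⟨v, rfl⟩ := ht
    have sum_eq : ∑ u with f u = f v, ψ (c * u) = ∑ h : f.ker, ψ (c * v * (h : Rˣ)) := by
      rw [← sum_subtype {u | f u = 1} (by simp [MonoidHom.mem_ker]) fun u : Rˣ => ψ (c * v * u)]
      exact sum_equiv (Equiv.mulLeft v⁻¹) (by simp [inv_mul_eq_one, eq_comm (a := f v)])
        (by simp [mul_assoc])
    have card_annihilator_eq : #{x | c * v * x = 0} = #{x | c * x = 0} :=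
      card_equiv (Units.mulLeft v) (by simp [mul_assoc])
    rw [sum_eq, ← card_annihilator_eq]
    exact norm_sq_sum_subgroup_addChar_mul_le hψ f.ker (c * v)
  · push Not at ht
    calc ‖∑ u with f u = t, ψ (c * u)‖ ^ 2 = 0 := by simp [ht]
      _ ≤ #{x | c * x = 0} * (Fintype.card R : ℝ) := by positivity

end PrimitiveAddChar

lemma norm_sq_sum_pow_eq_stdAddChar_le {n : ℕ} [NeZero n] {k : ℤ} (hk : k ≠ 0) (m : ℕ)
    (t : (ZMod n)ˣ) :
    ‖∑ u : (ZMod n)ˣ with u ^ m = t, ZMod.stdAddChar (N := n) (k * u)‖ ^ 2 ≤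
      (k.natAbs : ℝ) * n := by
  have card_annihilator_le : #{x : ZMod n | k * x = 0} ≤ k.natAbs := by
    simp only [← zsmul_eq_mul, ← natAbs_nsmul_eq_zero]
    convert IsAddCyclic.card_nsmul_eq_zero_le (α := ZMod n) (Int.natAbs_pos.mpr hk)
  calc ‖∑ u : (ZMod n)ˣ with u ^ m = t, ZMod.stdAddChar (N := n) (k * u)‖ ^ 2
      ≤ #{x : ZMod n | k * x = 0} * (Fintype.card (ZMod n) : ℝ) :=
        norm_sq_sum_fiber_addChar_mul_le (ZMod.isPrimitive_stdAddChar n) (powMonoidHom m) t k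
    _ ≤ k.natAbs * n := by
        rw [ZMod.card]
        gcongr

lemma pow_two_pow_mul_eq_one {M : Type*} [Monoid M] [HasDistribNeg M] {u : M} {i j d : ℕ}
    (h : u ^ (2 ^ i * d) = -1) (hij : i < j) : u ^ (2 ^ j * d) = 1 := by
  obtain ⟨c, rfl⟩ := Nat.exists_eq_add_of_lt hij
  rw [show 2 ^ (i + c + 1) * d = 2 ^ i * d * 2 * 2 ^ c by ring, pow_mul, pow_mul, h,
    neg_one_sq, one_pow]

lemma mem_zpowers_neg_one {G : Type*} [Group G] [HasDistribNeg G] {x : G} :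
    x ∈ Subgroup.zpowers (-1) ↔ x = 1 ∨ x = -1 := by
  constructor
  · rintro ⟨z, rfl⟩
    rcases z.even_or_odd with hz | hz
    · exact .inl hz.neg_one_zpow
    · exact .inr hz.neg_one_zpow
  · rintro (rfl | rfl)
    · exact one_mem _
    · exact Subgroup.mem_zpowers _

lemma two_mul_card_le_of_subset_subgroup {G : Type*} [Group G] [Finite G] {s : Finset G}
    {K : Subgroup G} (hs : (s : Set G) ⊆ K) {v : G} (hv : v ∉ K) : 2 * #s ≤ Nat.card G := by
  have index_ge : 2 ≤ K.index :=
    Subgroup.one_lt_index_of_ne_top fun h => hv (h ▸ Subgroup.mem_top v)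
  calc 2 * #s = 2 * (s : Set G).ncard := by rw [Set.ncard_coe_finset]
    _ ≤ K.index * Nat.card K := Nat.mul_le_mul index_ge (Set.ncard_le_ncard hs)
    _ = Nat.card G := K.index_mul_card

lemma two_pow_s2_mul_oddPart (n : ℕ) : 2 ^ s2 n * oddPart n = n - 1 :=
  Nat.ordProj_mul_ordCompl_eq_self _ _

lemma odd_oddPart {n : ℕ} (hn : 1 < n) : Odd (oddPart n) := by
  rw [← Nat.not_even_iff_odd, even_iff_two_dvd]
  exact Nat.not_dvd_ordCompl Nat.prime_two (by lia)

lemma s2_pos {n : ℕ} (hn : 1 < n) (hodd : Odd n) : 0 < s2 n :=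
  Nat.prime_two.factorization_pos_of_dvd (by lia) (Nat.Odd.sub_odd hodd odd_one).two_dvd

lemma s2_le_log {n : ℕ} (hn : 1 < n) : s2 n ≤ Nat.log 2 n :=
  Nat.le_log_of_pow_le one_lt_two ((Nat.ordProj_le 2 (by lia)).trans (n.sub_le 1))

/-- The strong liars of `n`: the residues prime to `n` that pass the Miller-Rabin test. They are
kept as units, so that they can be compared with subgroups of `(ZMod n)ˣ`. -/
def strongLiars (n : ℕ) [NeZero n] : Finset (ZMod n)ˣ :=
  {u | u ^ oddPart n = 1 ∨ ∃ j < s2 n, u ^ (2 ^ j * oddPart n) = -1}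

section StrongLiars

variable {n : ℕ} [NeZero n]

lemma mem_strongLiars {u : (ZMod n)ˣ} : u ∈ strongLiars n ↔
    u ^ oddPart n = 1 ∨ ∃ j < s2 n, u ^ (2 ^ j * oddPart n) = -1 := by
  simp [strongLiars]

lemma pow_pred_eq_one_of_mem_strongLiars {u : (ZMod n)ˣ} (hu : u ∈ strongLiars n) :
    u ^ (n - 1) = 1 := by
  rw [← two_pow_s2_mul_oddPart]
  rcases mem_strongLiars.mp hu with h | ⟨j, hj, h⟩
  · rw [mul_comm, pow_mul, h, one_pow]
  · exact pow_two_pow_mul_eq_one h hj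

lemma exists_pow_eq_neg_one_and_forall_strongLiars (hodd : Odd n) (hn : 1 < n) :
    ∃ m, (∃ a : (ZMod n)ˣ, a ^ m = -1) ∧ ∀ u ∈ strongLiars n, u ^ m = 1 ∨ u ^ m = -1 := by
  classical
  -- For the largest exponent at which `-1` is attained, liars of a smaller exponent have power `1`.
  let J : Finset ℕ := {j ∈ range (s2 n) | ∃ a : (ZMod n)ˣ, a ^ (2 ^ j * oddPart n) = -1}
  have zero_mem : 0 ∈ J := mem_filter.mpr
    ⟨mem_range.mpr (s2_pos hn hodd), -1, by simpa using (odd_oddPart hn).neg_one_pow⟩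
  obtain ⟨j, hj, le_j⟩ := J.exists_max_image id ⟨0, zero_mem⟩
  refine ⟨2 ^ j * oddPart n, (mem_filter.mp hj).2, fun u hu => ?_⟩
  rcases mem_strongLiars.mp hu with h | ⟨i, hi, h⟩
  · left
    rw [mul_comm, pow_mul, h, one_pow]
  · have hij : i ≤ j := le_j i (mem_filter.mpr ⟨mem_range.mpr hi, u, h⟩)
    rcases hij.lt_or_eq with hij | rfl
    · exact .inl (pow_two_pow_mul_eq_one h hij)
    · exact .inr h

lemma exists_pow_pred_ne_one_of_sq_dvd {p : ℕ} (hp : p.Prime) (hpn : p ^ 2 ∣ n) :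
    ∃ u : (ZMod n)ˣ, u ^ (n - 1) ≠ 1 := by
  have := Fact.mk hp
  have p_dvd_card : p ∣ Fintype.card (ZMod n)ˣ := by
    rw [ZMod.card_units_eq_totient]
    refine dvd_trans ?_ (Nat.totient_dvd_of_dvd hpn)
    simp [Nat.totient_prime_pow hp two_pos]
  obtain ⟨u, hu⟩ := exists_prime_orderOf_dvd_card p p_dvd_card
  refine ⟨u, fun h => hp.not_dvd_one ?_⟩
  have p_dvd_pred : p ∣ n - 1 := hu ▸ orderOf_dvd_of_pow_eq_one h
  have p_dvd : p ∣ n := (dvd_pow_self p two_ne_zero).trans hpn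
  simpa [Nat.sub_sub_self NeZero.one_le] using Nat.dvd_sub p_dvd p_dvd_pred

end StrongLiars

lemma neg_one_ne_one_units {n : ℕ} (hn : 2 < n) : (-1 : (ZMod n)ˣ) ≠ 1 := by
  have := Fact.mk hn
  simpa [Units.ext_iff] using ZMod.neg_one_ne_one (n := n)

lemma exists_pow_ne_one_and_pow_ne_neg_one {a b m : ℕ} (hab : a.Coprime b) (ha : 2 < a)
    (hb : 2 < b) {v : (ZMod (a * b))ˣ} (hv : v ^ m = -1) :
    ∃ u : (ZMod (a * b))ˣ, u ^ m ≠ 1 ∧ u ^ m ≠ -1 := by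
  -- The unit congruent to `v` modulo `a` and to `1` modulo `b` works.
  let φ : (ZMod (a * b))ˣ ≃* (ZMod a)ˣ × (ZMod b)ˣ :=
    (Units.mapEquiv (ZMod.chineseRemainder hab).toMulEquiv).trans MulEquiv.prodUnits
  have φ_neg_one : φ (-1) = (-1, -1) := by ext <;> simp [φ, MulEquiv.prodUnits]
  have φ_pow : φ (φ.symm ((φ v).1, 1) ^ m) = (-1, 1) := by
    rw [map_pow, φ.apply_symm_apply, Prod.pow_mk, ← Prod.pow_fst, ← map_pow, hv, φ_neg_one, one_pow]
  refine ⟨φ.symm ((φ v).1, 1), fun h => ?_, fun h => ?_⟩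
  · rw [h, map_one] at φ_pow
    exact neg_one_ne_one_units ha (congrArg Prod.fst φ_pow).symm
  · rw [h, φ_neg_one] at φ_pow
    exact neg_one_ne_one_units hb (congrArg Prod.snd φ_pow)

lemma exists_coprime_mul_eq_of_squarefree {n : ℕ} (hn : 1 < n) (hp : ¬ n.Prime)
    (hsq : Squarefree n) : ∃ a b, 1 < a ∧ 1 < b ∧ a.Coprime b ∧ a * b = n := by
  obtain ⟨a, b, ha, hb, rfl⟩ := (Nat.not_prime_iff_exists_mul_eq hn).mp hp
  exact ⟨a, b, (lt_mul_iff_one_lt_left (by lia)).mp hb, (lt_mul_iff_one_lt_right (by lia)).mp ha,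
    (Nat.squarefree_mul_iff.mp hsq).1, rfl⟩

lemma two_mul_card_strongLiars_le {n : ℕ} [NeZero n] (hodd : Odd n) (hn : 1 < n)
    (hp : ¬ n.Prime) : 2 * #(strongLiars n) ≤ n.totient := by
  rw [← ZMod.card_units_eq_totient, ← Nat.card_eq_fintype_card]
  by_cases hsq : Squarefree n
  · obtain ⟨a, b, ha, hb, hab, rfl⟩ := exists_coprime_mul_eq_of_squarefree hn hp hsq
    obtain ⟨odd_a, odd_b⟩ := Nat.odd_mul.mp hodd
    obtain ⟨m, ⟨v, hv⟩, liars_pow⟩ := exists_pow_eq_neg_one_and_forall_strongLiars hodd hn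
    obtain ⟨u, hu⟩ := exists_pow_ne_one_and_pow_ne_neg_one hab (by grind) (by grind) hv
    exact two_mul_card_le_of_subset_subgroup
      (K := (Subgroup.zpowers (-1)).comap (powMonoidHom m)) (v := u)
      (fun w hw => mem_zpowers_neg_one.mpr (liars_pow w hw)) fun h => by
        simpa [hu] using mem_zpowers_neg_one.mp h
  · obtain ⟨p, prime_p, hpn⟩ : ∃ p, p.Prime ∧ p * p ∣ n := by
      simpa [Nat.squarefree_iff_prime_squarefree] using hsq
    obtain ⟨u, hu⟩ := exists_pow_pred_ne_one_of_sq_dvd prime_p (sq p ▸ hpn)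
    exact two_mul_card_le_of_subset_subgroup (K := (powMonoidHom (n - 1) : (ZMod n)ˣ →* _).ker)
      (v := u) (fun w hw => pow_pred_eq_one_of_mem_strongLiars hw) hu

lemma units_val_injective (n : ℕ) [NeZero n] :
    Function.Injective fun u : (ZMod n)ˣ => (u : ZMod n).val :=
  (ZMod.val_injective n).comp Units.val_injective

lemma units_val_mem_witnessSet {n : ℕ} [NeZero n] (hn : 1 < n) {u : (ZMod n)ˣ} :
    (u : ZMod n).val ∈ witnessSet n ↔ u ∉ strongLiars n := by
  have one_lt_val (hu : u ^ oddPart n ≠ 1) : 1 < (u : ZMod n).val := by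
    have := Fact.mk hn
    have val_ne_zero : (u : ZMod n).val ≠ 0 := by simp
    have val_ne_one : (u : ZMod n).val ≠ 1 := fun h =>
      hu (by simp [(ZMod.val_eq_one hn _).mp h, Units.ext_iff])
    lia
  have pow_eq_one (m : ℕ) : (u : ZMod n) ^ m = 1 ↔ u ^ m = 1 := by simp [Units.ext_iff]
  have pow_eq_neg_one (m : ℕ) : (u : ZMod n) ^ m = -1 ↔ u ^ m = -1 := by simp [Units.ext_iff]
  have gcd_val : Nat.gcd (u : ZMod n).val n = 1 := ZMod.val_coe_unit_coprime u
  simp only [witnessSet, mem_filter, mem_range, ZMod.val_lt, ZMod.natCast_zmod_val, gcd_val,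
    mem_strongLiars, pow_eq_one, pow_eq_neg_one, ne_eq]
  grind

lemma witnessSet_eq_image {n : ℕ} [NeZero n] (hn : 1 < n) :
    witnessSet n = (strongLiars n)ᶜ.image fun u : (ZMod n)ˣ => (u : ZMod n).val := by
  ext w
  simp only [mem_image, mem_compl, ← units_val_mem_witnessSet hn]
  refine ⟨fun hw => ?_, by rintro ⟨u, hu, rfl⟩; exact hu⟩
  obtain ⟨hlt, -, coprime, -⟩ := mem_filter.mp hw
  have val_eq : (ZMod.unitOfCoprime w coprime : ZMod n).val = w := by
    rw [ZMod.coe_unitOfCoprime, ZMod.val_cast_of_lt (mem_range.mp hlt)]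
  exact ⟨ZMod.unitOfCoprime w coprime, by rwa [val_eq], val_eq⟩

lemma totient_le_two_mul_card_witnessSet {n : ℕ} (hodd : Odd n) (hn : 1 < n)
    (hp : ¬ n.Prime) : n.totient ≤ 2 * #(witnessSet n) := by
  have : NeZero n := ⟨by lia⟩
  have card_add : #(witnessSet n) + #(strongLiars n) = n.totient := by
    rw [witnessSet_eq_image hn, card_image_of_injective _ (units_val_injective n),
      card_compl_add_card, ZMod.card_units_eq_totient]
  have := two_mul_card_strongLiars_le hodd hn hp
  lia

lemma sum_strongLiars {n : ℕ} [NeZero n] (hn : 2 < n) {M : Type*} [AddCommMonoid M]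
    (f : (ZMod n)ˣ → M) :
    ∑ u ∈ strongLiars n, f u = ∑ u with u ^ oddPart n = 1, f u +
      ∑ j ∈ range (s2 n), ∑ u with u ^ (2 ^ j * oddPart n) = -1, f u := by
  have neg_one_ne_one := neg_one_ne_one_units hn
  rw [← sum_biUnion, ← sum_union]
  · congr 1
    ext u
    simp [mem_strongLiars]
  · simp only [disjoint_left, mem_biUnion, mem_filter_univ, not_exists, not_and]
    intro u hu j _ hj
    rw [mul_comm, pow_mul, hu, one_pow] at hj
    exact neg_one_ne_one hj.symm
  · intro i _ j _ hij
    simp only [Function.onFun, disjoint_left, mem_filter_univ]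
    intro u hi hj
    rcases hij.lt_or_gt with h | h
    · exact neg_one_ne_one (hj.symm.trans (pow_two_pow_mul_eq_one hi h))
    · exact neg_one_ne_one (hi.symm.trans (pow_two_pow_mul_eq_one hj h))

lemma cube_le_totient_pow_five {n : ℕ} (hn : Odd n) : n ^ 3 ≤ n.totient ^ 5 := by
  -- The case `p = 3` is tight, as `3 ^ 3 ≤ 2 ^ 5`; all that matters later is that `3 / 5 > 1 / 2`.
  induction n using Nat.recOnMul with
  | zero => simp
  | one => simp
  | prime p hp =>
    rw [Nat.totient_prime hp]
    obtain ⟨q, rfl⟩ : ∃ q, p = q + 3 := ⟨p - 3, by have := hp.two_le; grind⟩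
    calc (q + 3) ^ 3 ≤ (q + 2) ^ 5 := by ring_nf; lia
      _ = (q + 3 - 1) ^ 5 := rfl
  | mul a b iha ihb =>
    obtain ⟨odd_a, odd_b⟩ := Nat.odd_mul.mp hn
    calc (a * b) ^ 3 = a ^ 3 * b ^ 3 := mul_pow ..
      _ ≤ a.totient ^ 5 * b.totient ^ 5 := Nat.mul_le_mul (iha odd_a) (ihb odd_b)
      _ = (a.totient * b.totient) ^ 5 := (mul_pow ..).symm
      _ ≤ (a * b).totient ^ 5 := Nat.pow_le_pow_left (Nat.totient_super_multiplicative a b) 5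

lemma rpow_three_fifths_le_totient {n : ℕ} (hn : Odd n) : (n : ℝ) ^ (3 / 5 : ℝ) ≤ n.totient := by
  have : ((n : ℝ) ^ (3 / 5 : ℝ)) ^ 5 ≤ (n.totient : ℝ) ^ 5 := by
    rw [← Real.rpow_mul_natCast n.cast_nonneg]
    norm_num
    exact_mod_cast cube_le_totient_pow_five hn
  exact le_of_pow_le_pow_left₀ (n := 5) (by norm_num) n.totient.cast_nonneg this

lemma e_mul_val_div {n : ℕ} [NeZero n] (k : ℤ) (a : ZMod n) :
    e ((k : ℝ) * a.val / n) = ZMod.stdAddChar (N := n) (k * a) := by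
  have : (k : ZMod n) * a = ((k * a.val : ℤ) : ZMod n) := by simp
  rw [this, ZMod.stdAddChar_coe, e]
  push_cast
  congr 1
  ring

lemma norm_sum_witnessSet_le {n : ℕ} (hn : 2 < n) {k : ℤ} (hk : k ≠ 0) :
    ‖∑ w ∈ witnessSet n, e ((k : ℝ) * w / n)‖ ≤ (Real.logb 2 n + 2) * √(k.natAbs * n) := by
  have : NeZero n := ⟨by lia⟩
  set B := √((k.natAbs : ℝ) * n)
  let f : (ZMod n)ˣ → ℂ := fun u => ZMod.stdAddChar (N := n) (k * u)
  have norm_fiber_le (m : ℕ) (t : (ZMod n)ˣ) : ‖∑ u with u ^ m = t, f u‖ ≤ B :=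
    Real.le_sqrt_of_sq_le (norm_sq_sum_pow_eq_stdAddChar_le hk m t)
  have norm_univ_le : ‖∑ u, f u‖ ≤ B := by simpa using norm_fiber_le 0 1
  have norm_liars_le : ‖∑ u ∈ strongLiars n, f u‖ ≤ (Real.logb 2 n + 1) * B := by
    have s2_le : (s2 n : ℝ) ≤ Real.logb 2 n :=
      (Nat.cast_le.mpr (s2_le_log (by lia))).trans (Real.natLog_le_logb n 2)
    calc ‖∑ u ∈ strongLiars n, f u‖
        ≤ ‖∑ u with u ^ oddPart n = 1, f u‖ +
            ∑ j ∈ range (s2 n), ‖∑ u with u ^ (2 ^ j * oddPart n) = -1, f u‖ := by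
          rw [sum_strongLiars hn]
          exact norm_add_le_of_le le_rfl (norm_sum_le _ _)
      _ ≤ B + ∑ _j ∈ range (s2 n), B :=
          add_le_add (norm_fiber_le _ _) (sum_le_sum fun j _ => norm_fiber_le _ _)
      _ = (s2 n + 1) * B := by
          rw [sum_const, card_range, nsmul_eq_mul]
          ring
      _ ≤ (Real.logb 2 n + 1) * B := by gcongr
  calc ‖∑ w ∈ witnessSet n, e ((k : ℝ) * w / n)‖ = ‖∑ u ∈ (strongLiars n)ᶜ, f u‖ := by
        rw [witnessSet_eq_image (by lia), sum_image (units_val_injective n).injOn]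
        simp only [e_mul_val_div, f]
    _ = ‖∑ u, f u - ∑ u ∈ strongLiars n, f u‖ := by
        rw [← sum_compl_add_sum (strongLiars n), add_sub_cancel_right]
    _ ≤ B + (Real.logb 2 n + 1) * B := norm_sub_le_of_le norm_univ_le norm_liars_le
    _ = (Real.logb 2 n + 2) * B := by ring

lemma norm_sum_witnessSet_div_card_le {n : ℕ} (hodd : Odd n) (hp : ¬ n.Prime) (hn : 1 < n) {k : ℤ}
    (hk : k ≠ 0) :
    ‖(∑ w ∈ witnessSet n, e ((k : ℝ) * w / n)) / (#(witnessSet n) : ℂ)‖ ≤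
      2 * √k.natAbs * ((Real.logb 2 n + 2) / (n : ℝ) ^ (1 / 10 : ℝ)) := by
  have n_pos : (0 : ℝ) < n := by positivity
  have two_lt : 2 < n := by grind
  have rpow_le_card : (n : ℝ) ^ (3 / 5 : ℝ) / 2 ≤ #(witnessSet n) := by
    have : (n.totient : ℝ) ≤ 2 * #(witnessSet n) := by
      exact_mod_cast totient_le_two_mul_card_witnessSet hodd hn hp
    linarith [rpow_three_fifths_le_totient hodd]
  have rpow_eq : (n : ℝ) ^ (3 / 5 : ℝ) = √n * (n : ℝ) ^ (1 / 10 : ℝ) := by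
    rw [Real.sqrt_eq_rpow, ← Real.rpow_add n_pos]
    norm_num
  rw [norm_div, Complex.norm_natCast]
  calc ‖∑ w ∈ witnessSet n, e ((k : ℝ) * w / n)‖ / #(witnessSet n)
      ≤ (Real.logb 2 n + 2) * √(k.natAbs * n) / ((n : ℝ) ^ (3 / 5 : ℝ) / 2) := by
        gcongr
        · exact (norm_nonneg _).trans (norm_sum_witnessSet_le two_lt hk)
        · exact norm_sum_witnessSet_le two_lt hk
    _ = 2 * √k.natAbs * ((Real.logb 2 n + 2) / (n : ℝ) ^ (1 / 10 : ℝ)) := by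
        rw [rpow_eq, Real.sqrt_mul (Nat.cast_nonneg _)]
        have : 0 < √(n : ℝ) := Real.sqrt_pos.mpr n_pos
        field_simp

lemma tendsto_logb_add_div_rpow_atTop (b c : ℝ) {r : ℝ} (hr : 0 < r) :
    Tendsto (fun x : ℝ => (Real.logb b x + c) / x ^ r) atTop (nhds 0) := by
  have log_div := (isLittleO_log_rpow_atTop hr).tendsto_div_nhds_zero.div_const (Real.log b)
  have const_div := (tendsto_rpow_atTop hr).const_div_atTop c
  simpa [Real.logb, add_div, div_right_comm] using log_div.add const_div

/-- the normalized witness exponential sum tends to 0 along odd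
composite integers. -/
theorem witness_sum_normalized_tendsto_zero (k : ℤ) (hk : k ≠ 0) :
    Tendsto (fun n : ℕ => (∑ w ∈ witnessSet n, e ((k : ℝ) * w / n)) / ((witnessSet n).card : ℂ))
      (atTop ⊓ Filter.principal {n : ℕ | Odd n ∧ ¬ n.Prime ∧ 1 < n}) (nhds 0) := by
  have bound_tendsto : Tendsto (fun n : ℕ =>
      2 * √k.natAbs * ((Real.logb 2 n + 2) / (n : ℝ) ^ (1 / 10 : ℝ))) atTop (nhds 0) := by
    simpa using ((tendsto_logb_add_div_rpow_atTop 2 2 (by norm_num)).comp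
      tendsto_natCast_atTop_atTop).const_mul (2 * √(k.natAbs : ℝ))
  refine squeeze_zero_norm' ?_ (bound_tendsto.mono_left inf_le_left)
  filter_upwards [mem_inf_of_right (mem_principal_self _)] with n ⟨hodd, hp, hn⟩
  exact norm_sum_witnessSet_div_card_le hodd hp hn hk
end
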